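/- (Curvature of the prolonged Liouville connection) For smooth A₀, A₁, A₂, A₃ the 6×6 matrix-valued function ∂ₓΩ₂ − ∂_yΩ₁ + Ω₁Ω₂ − Ω₂Ω₁ on U has its first five rows identically zero, and its sixth row is equal to the vector V = (V₁, V₂, V₃, V₄, V₅, V₆). -/

import Mathlib

/-!
The matrices `Ω₁, Ω₂` encode the prolongation `∂ₓψ + Ω₁ψ = 0`, `∂_yψ + Ω₂ψ = 0` of the Liouville
system, with `ψ₄ = 2∂ₓψ₂`, `ψ₅ = 2∂_yψ₂` and `ψ₆ = 2∂ₓ∂_yψ₂`. Equality of the mixed derivatives of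
`ψ₁` and of `ψ₃` is what determines `∂ₓψ₄` and `∂_yψ₅`, that of `ψ₂` is `∂ₓψ₅ = ∂_yψ₄ = ψ₆`, and
those of `ψ₄` and `ψ₅` determine `∂ₓψ₆` and `∂_yψ₆`. So the first five rows of the curvature vanish
by construction, and the only integrability condition left is that of `ψ₆`, which is expressed
through `L₁`, `L₂` and their first derivatives.

Each entry of the curvature is a differential polynomial in the `Aᵢ`. It is expanded by the Leibniz
rule, and mixed derivatives are brought to the order `∂ₓ⋯∂ₓ∂_y⋯∂_y`; what remains is a polynomial
identity in the values of the partial derivatives at one point.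
-/

noncomputable section

open Matrix

/-- Partial derivative in the first (x) variable. -/
def pdx (f : ℝ × ℝ → ℝ) : ℝ × ℝ → ℝ :=
  fun p => deriv (fun t => f (t, p.2)) p.1

/-- Partial derivative in the second (y) variable. -/
def pdy (f : ℝ × ℝ → ℝ) : ℝ × ℝ → ℝ :=
  fun p => deriv (fun t => f (p.1, t)) p.2

/-- `pd 0 = ∂ₓ`, `pd 1 = ∂_y`. -/
def pd : Fin 2 → (ℝ × ℝ → ℝ) → (ℝ × ℝ → ℝ) := ![pdx, pdy]

/-- The Liouville linear system associated to `(A0, A1, A2, A3)`, holding on `U`. -/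
def LiouvilleSystem (U : Set (ℝ × ℝ)) (A0 A1 A2 A3 ψ1 ψ2 ψ3 : ℝ × ℝ → ℝ) : Prop :=
  ∀ p ∈ U,
    pdx ψ1 p = (2/3) * A1 p * ψ1 p - 2 * A0 p * ψ2 p ∧
    pdy ψ3 p = 2 * A3 p * ψ2 p - (2/3) * A2 p * ψ3 p ∧
    pdy ψ1 p + 2 * pdx ψ2 p
      = (4/3) * A2 p * ψ1 p - (2/3) * A1 p * ψ2 p - 2 * A0 p * ψ3 p ∧
    pdx ψ3 p + 2 * pdy ψ2 p
      = 2 * A3 p * ψ1 p - (4/3) * A1 p * ψ3 p + (2/3) * A2 p * ψ2 p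

/-- `(A0, A1, A2, A3)` is metrisable near `p` (within `U`). -/
def MetrisableNear (U : Set (ℝ × ℝ)) (A0 A1 A2 A3 : ℝ × ℝ → ℝ) (p : ℝ × ℝ) : Prop :=
  ∃ V : Set (ℝ × ℝ), IsOpen V ∧ p ∈ V ∧ V ⊆ U ∧
    ∃ E F G : ℝ × ℝ → ℝ,
      ContDiffOn ℝ (⊤ : ℕ∞) E V ∧ ContDiffOn ℝ (⊤ : ℕ∞) F V ∧ ContDiffOn ℝ (⊤ : ℕ∞) G V ∧
      (∀ q ∈ V, E q * G q - (F q) ^ 2 ≠ 0) ∧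
      (∀ q ∈ V,
        A0 q = (E q * pdy E q - 2 * E q * pdx F q + F q * pdx E q)
                 / (2 * (E q * G q - (F q) ^ 2)) ∧
        A1 q = (3 * F q * pdy E q + G q * pdx E q - 2 * F q * pdx F q - 2 * E q * pdx G q)
                 / (2 * (E q * G q - (F q) ^ 2)) ∧
        A2 q = (2 * F q * pdy F q + 2 * G q * pdy E q - 3 * F q * pdx G q - E q * pdy G q)
                 / (2 * (E q * G q - (F q) ^ 2)) ∧
        A3 q = (2 * G q * pdy F q - G q * pdx G q - F q * pdy G q)
                 / (2 * (E q * G q - (F q) ^ 2)))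

end

noncomputable section

/-- Liouville's first projective invariant `L₁`. -/
def Lio1 (A0 A1 A2 A3 : ℝ × ℝ → ℝ) : ℝ × ℝ → ℝ := fun p =>
  (2/3) * pdx (pdy A1) p - (1/3) * pdx (pdx A2) p - pdy (pdy A0) p
    + A0 p * pdy A2 p + A2 p * pdy A0 p - A3 p * pdx A0 p - 2 * A0 p * pdx A3 p
    - (2/3) * A1 p * pdy A1 p + (1/3) * A1 p * pdx A2 p

/-- Liouville's second projective invariant `L₂`. -/
def Lio2 (A0 A1 A2 A3 : ℝ × ℝ → ℝ) : ℝ × ℝ → ℝ := fun p =>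
  (2/3) * pdx (pdy A2) p - (1/3) * pdy (pdy A1) p - pdx (pdx A3) p
    - A3 p * pdx A1 p - A1 p * pdx A3 p + A0 p * pdy A3 p + 2 * A3 p * pdy A0 p
    + (2/3) * A2 p * pdx A2 p - (1/3) * A2 p * pdy A1 p

/-- The row vector `V = (V₁,…,V₆)`. -/
def Vrow (A0 A1 A2 A3 : ℝ × ℝ → ℝ) : ℝ × ℝ → Fin 6 → ℝ := fun p =>
  ![2 * pdy (Lio2 A0 A1 A2 A3) p + 4 * A2 p * Lio2 A0 A1 A2 A3 p
      + 8 * A3 p * Lio1 A0 A1 A2 A3 p,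
    -2 * pdy (Lio1 A0 A1 A2 A3) p - 2 * pdx (Lio2 A0 A1 A2 A3) p
      - (4/3) * A1 p * Lio2 A0 A1 A2 A3 p + (4/3) * A2 p * Lio1 A0 A1 A2 A3 p,
    2 * pdx (Lio1 A0 A1 A2 A3) p - 8 * A0 p * Lio2 A0 A1 A2 A3 p
      - 4 * A1 p * Lio1 A0 A1 A2 A3 p,
    -5 * Lio2 A0 A1 A2 A3 p,
    -5 * Lio1 A0 A1 A2 A3 p,
    0]

/-- The connection matrix `Ω₁`. -/
def Om1 (A0 A1 A2 A3 : ℝ × ℝ → ℝ) : ℝ × ℝ → Matrix (Fin 6) (Fin 6) ℝ := fun p =>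
  Matrix.of
  ![![-(2/3) * A1 p, 2 * A0 p, 0, 0, 0, 0],
    ![0, 0, 0, -(1/2 : ℝ), 0, 0],
    ![-2 * A3 p, -(2/3) * A2 p, (4/3) * A1 p, 0, 1, 0],
    ![-(4/3) * pdx A2 p + 4 * A0 p * A3 p + (2/3) * pdy A1 p,
      -2 * pdy A0 p + (2/3) * pdx A1 p + 4 * A2 p * A0 p - (4/9) * (A1 p) ^ 2,
      2 * pdx A0 p - 4 * A0 p * A1 p,
      -(1/3) * A1 p, -3 * A0 p, 0],
    ![0, 0, 0, 0, 0, -1],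
    ![-(4/3) * pdx (pdy A2) p - (20/3) * A0 p * A2 p * A3 p + (2/3) * pdy (pdy A1) p
        + 4 * A3 p * pdy A0 p - 2 * A0 p * pdy A3 p - (16/9) * A2 p * pdx A2 p
        + (8/9) * A2 p * pdy A1 p,
      (2/3) * pdx (pdy A1) p - (4/3) * A1 p * pdy A1 p + 2 * A0 p * pdy A2 p
        - 2 * pdy (pdy A0) p + 4 * A2 p * pdy A0 p + 4 * A3 p * pdx A0 p
        + 6 * A0 p * pdx A3 p + (8/9) * A1 p * pdx A2 p
        + (4/3) * A0 p * A1 p * A3 p - (4/3) * A0 p * (A2 p) ^ 2,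
      2 * pdx (pdy A0) p + (2/3) * A0 p * pdx A2 p - (4/3) * A2 p * pdx A0 p
        - 4 * A1 p * pdy A0 p - (4/3) * A0 p * pdy A1 p
        + (8/3) * A0 p * A1 p * A2 p + 4 * A3 p * (A0 p) ^ 2,
      (4/3) * pdx A2 p - pdy A1 p + 5 * A0 p * A3 p,
      (1/3) * pdx A1 p - 4 * pdy A0 p + 3 * A2 p * A0 p - (2/9) * (A1 p) ^ 2,
      -(1/3) * A1 p]]

/-- The connection matrix `Ω₂`. -/
def Om2 (A0 A1 A2 A3 : ℝ × ℝ → ℝ) : ℝ × ℝ → Matrix (Fin 6) (Fin 6) ℝ := fun p =>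
  Matrix.of
  ![![-(4/3) * A2 p, (2/3) * A1 p, 2 * A0 p, 1, 0, 0],
    ![0, 0, 0, 0, -(1/2 : ℝ), 0],
    ![0, -2 * A3 p, (2/3) * A2 p, 0, 0, 0],
    ![0, 0, 0, 0, 0, -1],
    ![-2 * pdy A3 p - 4 * A3 p * A2 p,
      2 * pdx A3 p - (2/3) * pdy A2 p + 4 * A1 p * A3 p - (4/9) * (A2 p) ^ 2,
      (4/3) * pdy A1 p - (2/3) * pdx A2 p + 4 * A0 p * A3 p,
      3 * A3 p, (1/3) * A2 p, 0],
    ![-2 * pdx (pdy A3) p - 4 * A2 p * pdx A3 p - (4/3) * A3 p * pdx A2 p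
        + (2/3) * A3 p * pdy A1 p - (4/3) * A1 p * pdy A3 p
        - 4 * A0 p * (A3 p) ^ 2 - (8/3) * A1 p * A2 p * A3 p,
      2 * pdx (pdx A3) p - (4/3) * A2 p * pdx A2 p - (4/3) * A0 p * A2 p * A3 p
        - (2/3) * pdx (pdy A2) p + 4 * A1 p * pdx A3 p + 4 * A0 p * pdy A3 p
        + 6 * A3 p * pdy A0 p + (4/3) * A3 p * (A1 p) ^ 2 + 2 * A3 p * pdx A1 p
        + (8/9) * A2 p * pdy A1 p,
      -(2/3) * pdx (pdx A2) p + (8/9) * A1 p * pdx A2 p + 4 * A0 p * pdx A3 p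
        - 2 * A3 p * pdx A0 p - (16/9) * A1 p * pdy A1 p + (4/3) * pdx (pdy A1) p
        + (20/3) * A0 p * A1 p * A3 p,
      4 * pdx A3 p - (1/3) * pdy A2 p + 3 * A1 p * A3 p - (2/9) * (A2 p) ^ 2,
      pdx A2 p - (4/3) * pdy A1 p + 5 * A0 p * A3 p,
      (1/3) * A2 p]]

/-- `Ω` indexed by a direction. -/
def Om (A0 A1 A2 A3 : ℝ × ℝ → ℝ) : Fin 2 → ℝ × ℝ → Matrix (Fin 6) (Fin 6) ℝ :=
  ![Om1 A0 A1 A2 A3, Om2 A0 A1 A2 A3]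

/-- The operator `D_a W = ∂_a W − W·Ω_a` on row-vector-valued functions. -/
def Dop (A0 A1 A2 A3 : ℝ × ℝ → ℝ) (a : Fin 2) (W : ℝ × ℝ → Fin 6 → ℝ) :
    ℝ × ℝ → Fin 6 → ℝ := fun p =>
  (fun i => pd a (fun q => W q i) p) - Matrix.vecMul (W p) (Om A0 A1 A2 A3 a p)

/-- Iterated derivative `D_{a₁} ⋯ D_{a_j} W` (the head of the list acts last/outermost). -/
def DIter (A0 A1 A2 A3 : ℝ × ℝ → ℝ) (l : List (Fin 2)) (W : ℝ × ℝ → Fin 6 → ℝ) :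
    ℝ × ℝ → Fin 6 → ℝ :=
  l.foldr (Dop A0 A1 A2 A3) W

/-- Symmetrised iterated derivative `D_{(a₁} ⋯ D_{a_j)} V` of the vector `V`. -/
def DSym (A0 A1 A2 A3 : ℝ × ℝ → ℝ) (l : List (Fin 2)) : ℝ × ℝ → Fin 6 → ℝ := fun p =>
  ((l.permutations.length : ℝ))⁻¹ •
    (l.permutations.map (fun m => DIter A0 A1 A2 A3 m (Vrow A0 A1 A2 A3) p)).sum

/-- The `6 × 6` matrix `M([Γ])` with rows `V, D₁V, D₂V, D₁D₁V, (1/2)(D₁D₂V + D₂D₁V), D₂D₂V`. -/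
def Mmat (A0 A1 A2 A3 : ℝ × ℝ → ℝ) : ℝ × ℝ → Matrix (Fin 6) (Fin 6) ℝ := fun p =>
  Matrix.of
  ![Vrow A0 A1 A2 A3 p,
    DIter A0 A1 A2 A3 [0] (Vrow A0 A1 A2 A3) p,
    DIter A0 A1 A2 A3 [1] (Vrow A0 A1 A2 A3) p,
    DIter A0 A1 A2 A3 [0, 0] (Vrow A0 A1 A2 A3) p,
    (1/2 : ℝ) • (DIter A0 A1 A2 A3 [0, 1] (Vrow A0 A1 A2 A3) p
      + DIter A0 A1 A2 A3 [1, 0] (Vrow A0 A1 A2 A3) p),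
    DIter A0 A1 A2 A3 [1, 1] (Vrow A0 A1 A2 A3) p]

end

open scoped Topology

section PartialDerivatives

variable {f g : ℝ × ℝ → ℝ} {p : ℝ × ℝ} {m n : WithTop ℕ∞}

lemma pd_eq_lineDeriv (a : Fin 2) (f : ℝ × ℝ → ℝ) (p : ℝ × ℝ) :
    pd a f p = lineDeriv ℝ f p (![(1, 0), (0, 1)] a) := by
  obtain ⟨x, y⟩ := p
  fin_cases a
  · simpa [pd, pdx, lineDeriv] using (deriv_comp_const_add (fun t => f (t, y)) x 0).symm
  · simpa [pd, pdy, lineDeriv] using (deriv_comp_const_add (fun t => f (x, t)) y 0).symm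

lemma pd_eq_fderiv (a : Fin 2) (hf : DifferentiableAt ℝ f p) :
    pd a f p = fderiv ℝ f p (![(1, 0), (0, 1)] a) :=
  (pd_eq_lineDeriv a f p).trans hf.lineDeriv_eq_fderiv

lemma pd_const (a : Fin 2) (c : ℝ) (p : ℝ × ℝ) : pd a (fun _ => c) p = 0 := by
  simp [pd_eq_lineDeriv, lineDeriv]

lemma pd_add (a : Fin 2) (hf : DifferentiableAt ℝ f p) (hg : DifferentiableAt ℝ g p) :
    pd a (fun q => f q + g q) p = pd a f p + pd a g p := by
  simp only [pd_eq_fderiv a, hf, hg, hf.fun_add hg, fderiv_fun_add hf hg, add_apply]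

lemma pd_sub (a : Fin 2) (hf : DifferentiableAt ℝ f p) (hg : DifferentiableAt ℝ g p) :
    pd a (fun q => f q - g q) p = pd a f p - pd a g p := by
  simp only [pd_eq_fderiv a, hf, hg, hf.fun_sub hg, fderiv_fun_sub hf hg, sub_apply]

lemma pd_mul (a : Fin 2) (hf : DifferentiableAt ℝ f p) (hg : DifferentiableAt ℝ g p) :
    pd a (fun q => f q * g q) p = f p * pd a g p + g p * pd a f p := by
  simp only [pd_eq_fderiv a, hf, hg, hf.fun_mul hg, fderiv_fun_mul hf hg,
    add_apply, smul_apply, smul_eq_mul]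

lemma pd_const_mul (a : Fin 2) (c : ℝ) (hf : DifferentiableAt ℝ f p) :
    pd a (fun q => c * f q) p = c * pd a f p := by
  simp only [pd_mul a (differentiableAt_const c) hf, pd_const, mul_zero, add_zero]

lemma pd_congr (a : Fin 2) (h : f =ᶠ[𝓝 p] g) : pd a f p = pd a g p := by
  simp only [pd_eq_lineDeriv, h.lineDeriv_eq]

lemma pd_eventuallyEq_fderiv (a : Fin 2) (hf : ContDiffAt ℝ 1 f p) :
    pd a f =ᶠ[𝓝 p] fun q => fderiv ℝ f q (![(1, 0), (0, 1)] a) := by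
  filter_upwards [hf.eventually (by simp)] with q hq
  exact pd_eq_fderiv a (hq.differentiableAt one_ne_zero)

lemma contDiffAt_pd (a : Fin 2) (hf : ContDiffAt ℝ n f p) (hmn : m + 1 ≤ n) :
    ContDiffAt ℝ m (pd a f) p :=
  ((hf.fderiv_right hmn).clm_apply contDiffAt_const).congr_of_eventuallyEq
    (pd_eventuallyEq_fderiv a (hf.of_le (le_add_self.trans hmn)))

lemma pd_pd_eq_fderiv_fderiv (a b : Fin 2) (hf : ContDiffAt ℝ 2 f p) :
    pd a (pd b f) p =
      fderiv ℝ (fderiv ℝ f) p (![(1, 0), (0, 1)] a) (![(1, 0), (0, 1)] b) := by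
  have hdf : DifferentiableAt ℝ (fderiv ℝ f) p :=
    (hf.fderiv_right (m := 1) (by norm_num)).differentiableAt one_ne_zero
  rw [pd_congr a (pd_eventuallyEq_fderiv b (hf.of_le one_le_two)),
    pd_eq_fderiv a (hdf.clm_apply (differentiableAt_const _)),
    fderiv_clm_apply hdf (differentiableAt_const _)]
  simp

lemma differentiableAt_and_pd (hf : ContDiffAt ℝ 2 f p) :
    DifferentiableAt ℝ f p ∧ ∀ a, DifferentiableAt ℝ (pd a f) p :=
  ⟨hf.differentiableAt two_ne_zero, fun a =>
    (contDiffAt_pd a (m := 1) hf one_add_one_eq_two.le).differentiableAt one_ne_zero⟩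

lemma differentiableAt_and_pd_and_pd_pd (hf : ContDiffAt ℝ 3 f p) :
    DifferentiableAt ℝ f p ∧ (∀ a, DifferentiableAt ℝ (pd a f) p) ∧
      ∀ a b, DifferentiableAt ℝ (pd a (pd b f)) p := by
  refine ⟨hf.differentiableAt three_ne_zero, fun a => ?_, fun a b => ?_⟩
  · exact (contDiffAt_pd a (m := 2) hf (by norm_num)).differentiableAt two_ne_zero
  · exact (contDiffAt_pd a (m := 1) (contDiffAt_pd b (m := 2) hf (by norm_num))
      (by norm_num)).differentiableAt one_ne_zero

lemma pd_comm (a b : Fin 2) (hf : ContDiffAt ℝ n f p) (hn : 2 ≤ n) :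
    pd a (pd b f) p = pd b (pd a f) p := by
  rw [pd_pd_eq_fderiv_fderiv a b (hf.of_le hn), pd_pd_eq_fderiv_fderiv b a (hf.of_le hn)]
  exact hf.isSymmSndFDerivAt (by simpa using hn) _ _

lemma pd_rotate (a b c : Fin 2) (hf : ContDiffAt ℝ 3 f p) :
    pd a (pd b (pd c f)) p = pd b (pd c (pd a f)) p := by
  have hcomm : pd a (pd c f) =ᶠ[𝓝 p] pd c (pd a f) := by
    filter_upwards [hf.eventually (by simp)] with q hq using pd_comm a c hq (by norm_num)
  rw [pd_comm a b (contDiffAt_pd c (m := 2) hf (by norm_num)) le_rfl, pd_congr b hcomm]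

lemma pdx_eq_pd : pdx = pd 0 := rfl

lemma pdy_eq_pd : pdy = pd 1 := rfl

end PartialDerivatives

section Curvature

/-- The curvature `∂ₓΩ₂ − ∂_yΩ₁ + Ω₁Ω₂ − Ω₂Ω₁` of a pair of connection matrices, indexed by
`0` for `Ω₁` and `1` for `Ω₂`. With `D_a W = ∂_a W − W·Ω_a` on row vectors, as in `Dop`, it is
characterised by `D₁D₂W − D₂D₁W = −W·F`. -/
noncomputable def connectionCurvature {ι : Type*} [Fintype ι]
    (Ω : Fin 2 → ℝ × ℝ → Matrix ι ι ℝ) (p : ℝ × ℝ) : Matrix ι ι ℝ :=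
  Matrix.of fun i j =>
    pd 0 (fun q => Ω 1 q i j) p - pd 1 (fun q => Ω 0 q i j) p
      + (Ω 0 p * Ω 1 p - Ω 1 p * Ω 0 p) i j

variable {A0 A1 A2 A3 : ℝ × ℝ → ℝ} {p : ℝ × ℝ}

lemma connectionCurvature_Om_apply (i j : Fin 6) :
    connectionCurvature (Om A0 A1 A2 A3) p i j =
      pd 0 (fun q => Om2 A0 A1 A2 A3 q i j) p - pd 1 (fun q => Om1 A0 A1 A2 A3 q i j) p
        + (∑ k, Om1 A0 A1 A2 A3 p i k * Om2 A0 A1 A2 A3 p k j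
            - ∑ k, Om2 A0 A1 A2 A3 p i k * Om1 A0 A1 A2 A3 p k j) :=
  rfl

lemma connectionCurvature_Om_zero (hA0 : DifferentiableAt ℝ A0 p) (hA1 : DifferentiableAt ℝ A1 p)
    (hA2 : DifferentiableAt ℝ A2 p) :
    connectionCurvature (Om A0 A1 A2 A3) p 0 = 0 := by
  ext j
  fin_cases j <;>
  · simp only [connectionCurvature_Om_apply, Fin.sum_univ_six, Om1, Om2, Matrix.of_apply,
      Fin.isValue, Fin.mk_one, Fin.zero_eta, Fin.reduceFinMk, Matrix.cons_val, Pi.zero_apply,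
      pdx_eq_pd, pdy_eq_pd]
    simp (disch := fun_prop) only [pd_const, pd_const_mul]
    ring

lemma connectionCurvature_Om_one : connectionCurvature (Om A0 A1 A2 A3) p 1 = 0 := by
  ext j
  fin_cases j <;>
  · simp only [connectionCurvature_Om_apply, Fin.sum_univ_six, Om1, Om2, Matrix.of_apply,
      Fin.isValue, Fin.mk_one, Fin.zero_eta, Fin.reduceFinMk, Matrix.cons_val, Pi.zero_apply,
      pdx_eq_pd, pdy_eq_pd]
    simp only [pd_const]
    ring

lemma connectionCurvature_Om_two (hA1 : DifferentiableAt ℝ A1 p) (hA2 : DifferentiableAt ℝ A2 p)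
    (hA3 : DifferentiableAt ℝ A3 p) :
    connectionCurvature (Om A0 A1 A2 A3) p 2 = 0 := by
  ext j
  fin_cases j <;>
  · simp only [connectionCurvature_Om_apply, Fin.sum_univ_six, Om1, Om2, Matrix.of_apply,
      Fin.isValue, Fin.mk_one, Fin.zero_eta, Fin.reduceFinMk, Matrix.cons_val, Pi.zero_apply,
      pdx_eq_pd, pdy_eq_pd]
    simp (disch := fun_prop) only [pd_const, pd_const_mul]
    ring

lemma connectionCurvature_Om_three (hA0 : ContDiffAt ℝ 2 A0 p) (hA1 : ContDiffAt ℝ 2 A1 p)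
    (hA2 : ContDiffAt ℝ 2 A2 p) (hA3 : DifferentiableAt ℝ A3 p) :
    connectionCurvature (Om A0 A1 A2 A3) p 3 = 0 := by
  obtain ⟨_, _⟩ := differentiableAt_and_pd hA0
  obtain ⟨_, _⟩ := differentiableAt_and_pd hA1
  obtain ⟨_, _⟩ := differentiableAt_and_pd hA2
  ext j
  fin_cases j <;>
  · simp only [connectionCurvature_Om_apply, Fin.sum_univ_six, Om1, Om2, Matrix.of_apply,
      Fin.isValue, Fin.mk_one, Fin.zero_eta, Fin.reduceFinMk, Matrix.cons_val, Pi.zero_apply,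
      pdx_eq_pd, pdy_eq_pd]
    simp (disch := first | fun_prop | norm_num) only [pd_const, pd_const_mul, sq, pd_add, pd_sub,
      pd_mul, pd_comm 1 0 hA0, pd_comm 1 0 hA1, pd_comm 1 0 hA2]
    ring

lemma connectionCurvature_Om_four (hA0 : DifferentiableAt ℝ A0 p) (hA1 : ContDiffAt ℝ 2 A1 p)
    (hA2 : ContDiffAt ℝ 2 A2 p) (hA3 : ContDiffAt ℝ 2 A3 p) :
    connectionCurvature (Om A0 A1 A2 A3) p 4 = 0 := by
  obtain ⟨_, _⟩ := differentiableAt_and_pd hA1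
  obtain ⟨_, _⟩ := differentiableAt_and_pd hA2
  obtain ⟨_, _⟩ := differentiableAt_and_pd hA3
  ext j
  fin_cases j <;>
  · simp only [connectionCurvature_Om_apply, Fin.sum_univ_six, Om1, Om2, Matrix.of_apply,
      Fin.isValue, Fin.mk_one, Fin.zero_eta, Fin.reduceFinMk, Matrix.cons_val, Pi.zero_apply,
      pdx_eq_pd, pdy_eq_pd]
    simp (disch := fun_prop) only [pd_const, pd_const_mul, sq, pd_add, pd_sub, pd_mul]
    ring

lemma connectionCurvature_Om_five_zero (hA0 : ContDiffAt ℝ 2 A0 p) (hA1 : ContDiffAt ℝ 3 A1 p)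
    (hA2 : ContDiffAt ℝ 3 A2 p) (hA3 : ContDiffAt ℝ 3 A3 p) :
    connectionCurvature (Om A0 A1 A2 A3) p 5 0 =
      2 * pdy (Lio2 A0 A1 A2 A3) p
        + 4 * A2 p * Lio2 A0 A1 A2 A3 p + 8 * A3 p * Lio1 A0 A1 A2 A3 p := by
  obtain ⟨_, _⟩ := differentiableAt_and_pd hA0
  obtain ⟨_, _, _⟩ := differentiableAt_and_pd_and_pd_pd hA1
  obtain ⟨_, _, _⟩ := differentiableAt_and_pd_and_pd_pd hA2
  obtain ⟨_, _, _⟩ := differentiableAt_and_pd_and_pd_pd hA3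
  unfold Lio1 Lio2
  simp only [connectionCurvature_Om_apply, Fin.sum_univ_six, Om1, Om2, Matrix.of_apply,
    Matrix.cons_val, pdx_eq_pd, pdy_eq_pd]
  simp (disch := first | fun_prop | norm_num) only [pd_const_mul, sq, pd_add, pd_sub, pd_mul,
    pd_comm 1 0 hA1, pd_comm 1 0 hA2, pd_rotate 1 0 _ hA2, pd_comm 1 0 hA3, pd_rotate 1 0 _ hA3]
  ring

lemma connectionCurvature_Om_five_one (hA0 : ContDiffAt ℝ 3 A0 p) (hA1 : ContDiffAt ℝ 3 A1 p)
    (hA2 : ContDiffAt ℝ 3 A2 p) (hA3 : ContDiffAt ℝ 3 A3 p) :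
    connectionCurvature (Om A0 A1 A2 A3) p 5 1 =
      -2 * pdy (Lio1 A0 A1 A2 A3) p - 2 * pdx (Lio2 A0 A1 A2 A3) p
        - (4/3) * A1 p * Lio2 A0 A1 A2 A3 p + (4/3) * A2 p * Lio1 A0 A1 A2 A3 p := by
  obtain ⟨_, _, _⟩ := differentiableAt_and_pd_and_pd_pd hA0
  obtain ⟨_, _, _⟩ := differentiableAt_and_pd_and_pd_pd hA1
  obtain ⟨_, _, _⟩ := differentiableAt_and_pd_and_pd_pd hA2
  obtain ⟨_, _, _⟩ := differentiableAt_and_pd_and_pd_pd hA3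
  unfold Lio1 Lio2
  simp only [connectionCurvature_Om_apply, Fin.sum_univ_six, Om1, Om2, Matrix.of_apply,
    Matrix.cons_val, pdx_eq_pd, pdy_eq_pd]
  simp (disch := first | fun_prop | norm_num) only [pd_const_mul, sq, pd_add, pd_sub, pd_mul,
    pd_comm 1 0 hA0, pd_rotate 1 0 _ hA1, pd_comm 1 0 hA2, pd_rotate 1 0 _ hA2, pd_comm 1 0 hA3]
  ring

lemma connectionCurvature_Om_five_two (hA0 : ContDiffAt ℝ 3 A0 p) (hA1 : ContDiffAt ℝ 3 A1 p)
    (hA2 : ContDiffAt ℝ 3 A2 p) (hA3 : ContDiffAt ℝ 2 A3 p) :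
    connectionCurvature (Om A0 A1 A2 A3) p 5 2 =
      2 * pdx (Lio1 A0 A1 A2 A3) p
        - 8 * A0 p * Lio2 A0 A1 A2 A3 p - 4 * A1 p * Lio1 A0 A1 A2 A3 p := by
  obtain ⟨_, _, _⟩ := differentiableAt_and_pd_and_pd_pd hA0
  obtain ⟨_, _, _⟩ := differentiableAt_and_pd_and_pd_pd hA1
  obtain ⟨_, _, _⟩ := differentiableAt_and_pd_and_pd_pd hA2
  obtain ⟨_, _⟩ := differentiableAt_and_pd hA3
  unfold Lio1 Lio2
  simp only [connectionCurvature_Om_apply, Fin.sum_univ_six, Om1, Om2, Matrix.of_apply,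
    Matrix.cons_val, pdx_eq_pd, pdy_eq_pd]
  simp (disch := first | fun_prop | norm_num) only [pd_const_mul, sq, pd_add, pd_sub, pd_mul,
    pd_comm 1 0 hA0, pd_rotate 1 0 _ hA0, pd_comm 1 0 hA2]
  ring

lemma connectionCurvature_Om_five_three (hA0 : DifferentiableAt ℝ A0 p) (hA1 : ContDiffAt ℝ 2 A1 p)
    (hA2 : ContDiffAt ℝ 2 A2 p) (hA3 : ContDiffAt ℝ 2 A3 p) :
    connectionCurvature (Om A0 A1 A2 A3) p 5 3 = -5 * Lio2 A0 A1 A2 A3 p := by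
  obtain ⟨_, _⟩ := differentiableAt_and_pd hA1
  obtain ⟨_, _⟩ := differentiableAt_and_pd hA2
  obtain ⟨_, _⟩ := differentiableAt_and_pd hA3
  simp only [connectionCurvature_Om_apply, Fin.sum_univ_six, Om1, Om2, Matrix.of_apply,
    Matrix.cons_val, Lio2, pdx_eq_pd, pdy_eq_pd]
  simp (disch := first | fun_prop | norm_num) only [pd_const_mul, sq, pd_add, pd_sub, pd_mul,
    pd_comm 1 0 hA2]
  ring

lemma connectionCurvature_Om_five_four (hA0 : ContDiffAt ℝ 2 A0 p) (hA1 : ContDiffAt ℝ 2 A1 p)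
    (hA2 : ContDiffAt ℝ 2 A2 p) (hA3 : DifferentiableAt ℝ A3 p) :
    connectionCurvature (Om A0 A1 A2 A3) p 5 4 = -5 * Lio1 A0 A1 A2 A3 p := by
  obtain ⟨_, _⟩ := differentiableAt_and_pd hA0
  obtain ⟨_, _⟩ := differentiableAt_and_pd hA1
  obtain ⟨_, _⟩ := differentiableAt_and_pd hA2
  simp only [connectionCurvature_Om_apply, Fin.sum_univ_six, Om1, Om2, Matrix.of_apply,
    Matrix.cons_val, Lio1, pdx_eq_pd, pdy_eq_pd]
  simp (disch := first | fun_prop | norm_num) only [pd_const_mul, sq, pd_add, pd_sub, pd_mul,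
    pd_comm 1 0 hA1]
  ring

lemma connectionCurvature_Om_five_five (hA1 : DifferentiableAt ℝ A1 p)
    (hA2 : DifferentiableAt ℝ A2 p) :
    connectionCurvature (Om A0 A1 A2 A3) p 5 5 = 0 := by
  simp only [connectionCurvature_Om_apply, Fin.sum_univ_six, Om1, Om2, Matrix.of_apply,
    Matrix.cons_val, pdx_eq_pd, pdy_eq_pd]
  simp (disch := fun_prop) only [pd_const_mul]
  ring

lemma connectionCurvature_Om_five (hA0 : ContDiffAt ℝ 3 A0 p) (hA1 : ContDiffAt ℝ 3 A1 p)
    (hA2 : ContDiffAt ℝ 3 A2 p) (hA3 : ContDiffAt ℝ 3 A3 p) :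
    connectionCurvature (Om A0 A1 A2 A3) p 5 = Vrow A0 A1 A2 A3 p := by
  have hC2 {A : ℝ × ℝ → ℝ} (hA : ContDiffAt ℝ 3 A p) : ContDiffAt ℝ 2 A p :=
    hA.of_le (by norm_num)
  have hD {A : ℝ × ℝ → ℝ} (hA : ContDiffAt ℝ 3 A p) : DifferentiableAt ℝ A p :=
    hA.differentiableAt three_ne_zero
  ext j
  fin_cases j
  · exact connectionCurvature_Om_five_zero (hC2 hA0) hA1 hA2 hA3
  · exact connectionCurvature_Om_five_one hA0 hA1 hA2 hA3
  · exact connectionCurvature_Om_five_two hA0 hA1 hA2 (hC2 hA3)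
  · exact connectionCurvature_Om_five_three (hD hA0) (hC2 hA1) (hC2 hA2) (hC2 hA3)
  · exact connectionCurvature_Om_five_four (hC2 hA0) (hC2 hA1) (hC2 hA2) (hD hA3)
  · exact connectionCurvature_Om_five_five (hD hA1) (hD hA2)

end Curvature

theorem curvature_rows_general {A0 A1 A2 A3 : ℝ × ℝ → ℝ} {p : ℝ × ℝ}
    (hA0 : ContDiffAt ℝ 3 A0 p) (hA1 : ContDiffAt ℝ 3 A1 p)
    (hA2 : ContDiffAt ℝ 3 A2 p) (hA3 : ContDiffAt ℝ 3 A3 p) :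
    connectionCurvature (Om A0 A1 A2 A3) p = Matrix.updateRow 0 5 (Vrow A0 A1 A2 A3 p) := by
  have hC2 {A : ℝ × ℝ → ℝ} (hA : ContDiffAt ℝ 3 A p) : ContDiffAt ℝ 2 A p :=
    hA.of_le (by norm_num)
  have hD {A : ℝ × ℝ → ℝ} (hA : ContDiffAt ℝ 3 A p) : DifferentiableAt ℝ A p :=
    hA.differentiableAt three_ne_zero
  funext i
  fin_cases i
  · exact connectionCurvature_Om_zero (hD hA0) (hD hA1) (hD hA2)
  · exact connectionCurvature_Om_one
  · exact connectionCurvature_Om_two (hD hA1) (hD hA2) (hD hA3)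
  · exact connectionCurvature_Om_three (hC2 hA0) (hC2 hA1) (hC2 hA2) (hD hA3)
  · exact connectionCurvature_Om_four (hD hA0) (hC2 hA1) (hC2 hA2) (hC2 hA3)
  · exact connectionCurvature_Om_five hA0 hA1 hA2 hA3

/-- **Curvature of the prolonged Liouville connection.** The matrix
`∂ₓΩ₂ − ∂_yΩ₁ + Ω₁Ω₂ − Ω₂Ω₁` has its first five rows zero and sixth row equal to `V`. -/
theorem curvature_rows (U : Set (ℝ × ℝ)) (hU : IsOpen U) (hUconn : IsConnected U)
    (A0 A1 A2 A3 : ℝ × ℝ → ℝ)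
    (hA0 : ContDiffOn ℝ (⊤ : ℕ∞) A0 U) (hA1 : ContDiffOn ℝ (⊤ : ℕ∞) A1 U)
    (hA2 : ContDiffOn ℝ (⊤ : ℕ∞) A2 U) (hA3 : ContDiffOn ℝ (⊤ : ℕ∞) A3 U) :
    ∀ p ∈ U, ∀ j : Fin 6,
      (∀ i : Fin 6, (i : ℕ) < 5 →
        pdx (fun q => Om2 A0 A1 A2 A3 q i j) p - pdy (fun q => Om1 A0 A1 A2 A3 q i j) p
          + (Om1 A0 A1 A2 A3 p * Om2 A0 A1 A2 A3 p
              - Om2 A0 A1 A2 A3 p * Om1 A0 A1 A2 A3 p) i j = 0) ∧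
      pdx (fun q => Om2 A0 A1 A2 A3 q 5 j) p - pdy (fun q => Om1 A0 A1 A2 A3 q 5 j) p
        + (Om1 A0 A1 A2 A3 p * Om2 A0 A1 A2 A3 p
            - Om2 A0 A1 A2 A3 p * Om1 A0 A1 A2 A3 p) 5 j
        = Vrow A0 A1 A2 A3 p j := by
  intro p hp j
  have hA {A : ℝ × ℝ → ℝ} (h : ContDiffOn ℝ (⊤ : ℕ∞) A U) : ContDiffAt ℝ 3 A p :=
    (h.contDiffAt (hU.mem_nhds hp)).of_le (by norm_cast)
  have hF := curvature_rows_general (hA hA0) (hA hA1) (hA hA2) (hA hA3)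
  refine ⟨fun i hi => ?_, (congrFun₂ hF 5 j).trans (by simp)⟩
  exact (congrFun₂ hF i j).trans (by rw [Matrix.updateRow_ne (by omega), Matrix.zero_apply])
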